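/- Let ν be a lattice path and let T, T' be ν-trees. Then T' can be obtained from T by a (possibly empty) finite sequence of right rotations if and only if b(T) ≤ b(T') componentwise. In particular, if T ≠ T' and T' is reachable from T by right rotations then b(T) < b(T') (componentwise ≤ with at least one strict inequality), and conversely. -/

import Mathlib

open scoped Classical

/-! Lattice paths: `true` = north step, `false` = east step. -/

def eastSteps (ν : List Bool) : ℕ := ν.count false
def northSteps (ν : List Bool) : ℕ := ν.count true

/-- Height at which the path first reaches abscissa `x`. -/
def heightAt : List Bool → ℕ → ℕ
  | _, 0 => 0
  | [], _ + 1 => 0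
  | true :: rest, x + 1 => heightAt rest (x + 1) + 1
  | false :: rest, x + 1 => heightAt rest x

/-- Lattice point of a path after `i` steps. -/
def pointAt (μ : List Bool) (i : ℕ) : ℕ × ℕ :=
  ((μ.take i).count false, (μ.take i).count true)

/-- The set `A_ν` of lattice points weakly above `ν`. -/
def APts (ν : List Bool) : Set (ℕ × ℕ) :=
  {p | p.1 ≤ eastSteps ν ∧ heightAt ν p.1 ≤ p.2 ∧ p.2 ≤ northSteps ν}

def Incompatible (ν : List Bool) (p q : ℕ × ℕ) : Prop :=
  (p.1 < q.1 ∧ p.2 < q.2 ∧ (q.1, p.2) ∈ APts ν) ∨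
    (q.1 < p.1 ∧ q.2 < p.2 ∧ (p.1, q.2) ∈ APts ν)

def Compatible (ν : List Bool) (p q : ℕ × ℕ) : Prop := ¬ Incompatible ν p q

def IsNuTree (ν : List Bool) (T : Set (ℕ × ℕ)) : Prop :=
  T ⊆ APts ν ∧ T.Pairwise (Compatible ν) ∧
    ∀ T', T' ⊆ APts ν → T'.Pairwise (Compatible ν) → T ⊆ T' → T' = T

def IsRightRotationAt (T T' : Set (ℕ × ℕ)) (q q' : ℕ × ℕ) : Prop :=
  ∃ x y x'' y', q = (x, y) ∧ q' = (x'', y') ∧ x < x'' ∧ y < y' ∧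
    (x, y) ∈ T ∧ (x, y') ∈ T ∧ (x'', y) ∈ T ∧
    (∀ b, y < b → b < y' → (x, b) ∉ T) ∧
    (∀ a, x < a → a < x'' → (a, y) ∉ T) ∧
    (∀ a, x < a → a < x'' → (a, y') ∉ T) ∧
    (∀ b, y < b → b < y' → (x'', b) ∉ T) ∧
    T' = (T \ {(x, y)}) ∪ {(x'', y')}

def IsRightRotation (T T' : Set (ℕ × ℕ)) : Prop :=
  ∃ q q', IsRightRotationAt T T' q q'

/-- Order relation of the rotation poset of ν-trees. -/
def TreeLE (ν : List Bool) : Set (ℕ × ℕ) → Set (ℕ × ℕ) → Prop :=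
  Relation.ReflTransGen fun A B => IsNuTree ν A ∧ IsNuTree ν B ∧ IsRightRotation A B

def IsNuPath (ν μ : List Bool) : Prop :=
  eastSteps μ = eastSteps ν ∧ northSteps μ = northSteps ν ∧
    ∀ i ≤ μ.length, pointAt μ i ∈ APts ν

noncomputable def horiz (ν : List Bool) (p : ℕ × ℕ) : ℕ :=
  sSup {k | (p.1 + k, p.2) ∈ APts ν}

/-- Covering relation of the ν-Tamari lattice. -/
def TamariCover (ν μ μ' : List Bool) : Prop :=
  IsNuPath ν μ ∧ IsNuPath ν μ' ∧
    ∃ i j, 0 < i ∧ i < j ∧ j ≤ μ.length ∧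
      μ.getD (i - 1) true = false ∧ μ.getD i false = true ∧
      horiz ν (pointAt μ j) = horiz ν (pointAt μ i) ∧
      (∀ k, i < k → k < j → horiz ν (pointAt μ k) ≠ horiz ν (pointAt μ i)) ∧
      μ' = μ.take (i - 1) ++ (μ.drop i).take (j - i) ++ [false] ++ μ.drop j

def TamariLE (ν : List Bool) : List Bool → List Bool → Prop :=
  Relation.ReflTransGen (TamariCover ν)

/-! Flushing maps -/

def rowAvail (ν : List Bool) (y : ℕ) : List ℕ :=
  ((List.range (eastSteps ν + 1)).filter fun x => decide (heightAt ν x ≤ y)).reverse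

def pointsAtHeight (μ : List Bool) (y : ℕ) : ℕ :=
  ((List.range (μ.length + 1)).filter fun i => decide ((μ.take i).count true = y)).length

def rflushAux (ν : List Bool) : List ℕ → ℕ → List ℕ → List (ℕ × ℕ)
  | [], _, _ => []
  | c :: rest, y, forbidden =>
    let placed := ((rowAvail ν y).filter fun x => decide (x ∉ forbidden)).take c
    placed.map (fun x => (x, y)) ++ rflushAux ν rest (y + 1) (forbidden ++ placed.dropLast)

/-- Right-flushing map `R`. -/
def Rflush (ν μ : List Bool) : Set (ℕ × ℕ) :=
  {p | p ∈ rflushAux ν ((List.range (northSteps ν + 1)).map (pointsAtHeight μ)) 0 []}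

def lflushAux (m : ℕ) : List ℕ → ℕ → List ℕ → List (ℕ × ℕ)
  | [], _, _ => []
  | c :: rest, y, forbidden =>
    let placed := ((List.range (m + 1)).filter fun x => decide (x ∉ forbidden)).take c
    placed.map (fun x => (x, y)) ++ lflushAux m rest (y + 1) (forbidden ++ placed.dropLast)

noncomputable def rowCount (T : Set (ℕ × ℕ)) (y : ℕ) : ℕ := {x | (x, y) ∈ T}.ncard

/-- Left-flushing map `L`. -/
noncomputable def Lflush (ν : List Bool) (T : Set (ℕ × ℕ)) : Set (ℕ × ℕ) :=
  {p | p ∈ lflushAux (eastSteps ν) ((List.range (northSteps ν + 1)).map (rowCount T)) 0 []}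

def pathPointSet (μ : List Bool) : Set (ℕ × ℕ) := {p | ∃ i ≤ μ.length, pointAt μ i = p}

/-! Bracket vectors (0-indexed positions `0,…,ℓ`). -/

noncomputable def fpos (ν : List Bool) (k : ℕ) : ℕ :=
  sSup {i | i ≤ ν.length ∧ (ν.take i).count true = k}

def bmin (ν : List Bool) : List ℕ :=
  (List.range (ν.length + 1)).map fun i => (ν.take i).count true

def IsBracketVector (ν : List Bool) (b : List ℕ) : Prop :=
  b.length = ν.length + 1 ∧
    (∀ k ≤ northSteps ν, b.getD (fpos ν k) 0 = k) ∧
    (∀ i < b.length, (bmin ν).getD i 0 ≤ b.getD i 0 ∧ b.getD i 0 ≤ northSteps ν) ∧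
    ∀ i j k, i < j → j < k → k < b.length →
      ¬(b.getD i 0 = b.getD k 0 ∧ b.getD i 0 < b.getD j 0)

noncomputable def leftChild (T : Set (ℕ × ℕ)) (p : ℕ × ℕ) : Option (ℕ × ℕ) :=
  if ∃ b, (p.1, b) ∈ T ∧ b < p.2 then some (p.1, sSup {b | (p.1, b) ∈ T ∧ b < p.2})
  else none

noncomputable def rightChild (T : Set (ℕ × ℕ)) (p : ℕ × ℕ) : Option (ℕ × ℕ) :=
  if ∃ a, (a, p.2) ∈ T ∧ p.1 < a then
    if ∃ b, (sInf {a | (a, p.2) ∈ T ∧ p.1 < a}, b) ∈ T ∧ p.2 < b then none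
    else some (sInf {a | (a, p.2) ∈ T ∧ p.1 < a}, p.2)
  else none

noncomputable def inorderAux (T : Set (ℕ × ℕ)) : ℕ → ℕ × ℕ → List (ℕ × ℕ)
  | 0, _ => []
  | fuel + 1, p =>
    (match leftChild T p with
      | none => []
      | some l => inorderAux T fuel l) ++ p ::
      (match rightChild T p with
        | none => []
        | some r => inorderAux T fuel r)

/-- Bracket vector of a ν-tree: y-coordinates read in in-order from the root `(0,n)`. -/
noncomputable def bracketOfTree (ν : List Bool) (T : Set (ℕ × ℕ)) : List ℕ :=
  (inorderAux T T.ncard (0, northSteps ν)).map Prod.snd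

noncomputable def bracketAssign (ν μ : List Bool) : List (ℕ × ℕ) :=
  ((List.range (northSteps ν + 1)).foldl
    (fun (st : List (ℕ × ℕ) × List ℕ) k =>
      let picked := ((st.2.filter fun i => decide (i ≤ fpos ν k)).reverse).take
        (pointsAtHeight μ k)
      (st.1 ++ picked.map fun i => (i, k), st.2.filter fun i => decide (i ∉ picked)))
    ([], List.range (ν.length + 1))).1

/-- Bracket vector of a ν-path. -/
noncomputable def bracketOfPath (ν μ : List Bool) : List ℕ :=
  (List.range (ν.length + 1)).map fun i => ((bracketAssign ν μ).lookup i).getD 0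

/-- Componentwise order on (equal length) integer vectors. -/
def listLE (b b' : List ℕ) : Prop :=
  b.length = b'.length ∧ ∀ i, b.getD i 0 ≤ b'.getD i 0

/-! Reversal -/

def revPath (ν : List Bool) : List Bool := ν.reverse.map fun s => !s

def revTree (ν : List Bool) (T : Set (ℕ × ℕ)) : Set (ℕ × ℕ) :=
  (fun p : ℕ × ℕ => (northSteps ν - p.2, eastSteps ν - p.1)) '' T

/-! Pipe dreams and subword complexes -/

def dOf (ν : List Bool) (p : ℕ × ℕ) : ℕ := p.1 + (northSteps ν - p.2)

def labelPerm (ν : List Bool) (p : ℕ × ℕ) : Equiv.Perm ℕ :=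
  Equiv.swap (dOf ν p + 1) (dOf ν p + 2)

/-- The points of `A_ν` in reading order: rows from bottom to top, each left to right. -/
def readingList (ν : List Bool) : List (ℕ × ℕ) :=
  ((List.range (northSteps ν + 1)).map fun y =>
    ((List.range (eastSteps ν + 1)).filter fun x => decide (heightAt ν x ≤ y)).map
      fun x => (x, y)).flatten

/-- The minimal ν-tree. -/
def TminSet (ν : List Bool) : Set (ℕ × ℕ) :=
  {p | p ∈ APts ν ∧ (p.1 = 0 ∨ ∃ i < ν.length, ν.getD i true = false ∧ p = pointAt ν (i + 1))}

noncomputable def prodOver (ν : List Bool) (C : Set (ℕ × ℕ)) : Equiv.Perm ℕ :=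
  (((readingList ν).filter fun p => decide (p ∈ C)).map (labelPerm ν)).prod

/-- Coxeter length: number of inversions. -/
noncomputable def lenInv (π : Equiv.Perm ℕ) : ℕ :=
  {q : ℕ × ℕ | q.1 < q.2 ∧ π q.2 < π q.1}.ncard

noncomputable def piNu (ν : List Bool) : Equiv.Perm ℕ := prodOver ν (APts ν \ TminSet ν)

def Qword (ν : List Bool) : List (Equiv.Perm ℕ) := (readingList ν).map (labelPerm ν)

noncomputable def prodAt (Q : List (Equiv.Perm ℕ)) (P : Finset ℕ) : Equiv.Perm ℕ :=
  (((List.range Q.length).filter fun i => decide (i ∈ P)).map fun i => Q.getD i 1).prod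

def IsFacet (Q : List (Equiv.Perm ℕ)) (π : Equiv.Perm ℕ) (I : Finset ℕ) : Prop :=
  I ⊆ Finset.range Q.length ∧
    prodAt Q (Finset.range Q.length \ I) = π ∧
    (Finset.range Q.length \ I).card = lenInv π

def IncFlip (Q : List (Equiv.Perm ℕ)) (π : Equiv.Perm ℕ) (I J : Finset ℕ) : Prop :=
  IsFacet Q π I ∧ IsFacet Q π J ∧ ∃ i ∈ I, ∃ j ∈ J, i < j ∧ I.erase i = J.erase j

def FlipLE (Q : List (Equiv.Perm ℕ)) (π : Equiv.Perm ℕ) : Finset ℕ → Finset ℕ → Prop :=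
  Relation.ReflTransGen (IncFlip Q π)

/-- The maximal ν-tree. -/
def TmaxSet (ν : List Bool) : Set (ℕ × ℕ) :=
  {p | (p.1 ≤ eastSteps ν ∧ p.2 = northSteps ν) ∨ ∃ i < ν.length, ν.getD i false = true ∧ p = pointAt ν i}

/-!
Count positions in `ν` and in `b(T)` from `0`. The subtree of a ν-tree `T` rooted at a node `(x, y)`
occupies the in-order positions from `x + heightAt ν x`, where `ν` reaches abscissa `x`, to
`rowEnd ν y + y`, where it leaves height `y`. So a node with right child `(a, y)` sits at the
position of the east step of `ν` arriving at abscissa `a`, and `y` is the top of column `a`; a node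
of height `y` without right child sits at position `f_y`. Thus `b(T)` records the column tops of
`T` at the east steps of `ν` and agrees with `b_min` elsewhere. Hence `T` is determined by `b(T)`,
and `b(T) ≤ b(T')` says that the column tops of `T` are at most those of `T'`.

A right rotation of `T` at `(x, y)` changes a single column top: that of column `x''` increases
from `y` to `y'`. So rotations increase bracket vectors. Conversely, suppose the column tops of `T`
are at most those of `T'`, with strict inequality at `c` and equality to the left of `c`. Let
`(x, y)` be the left neighbour in its row of the top `(c, y)` of column `c`. As `T` and `T'` have
the same top in column `x`, compatibility in `T'` forces `T` to have a node above `(x, y)`, and the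
rotation of `T` at `(x, y)` keeps the column tops at most those of `T'`.
-/

/-! ### The lattice path -/

section LatticePath

variable {ν : List Bool} {x x' y : ℕ}

@[simp]
theorem heightAt_zero (ν : List Bool) : heightAt ν 0 = 0 := by
  rcases ν with _ | ⟨_ | _, _⟩ <;> rfl

theorem heightAt_le_northSteps (ν : List Bool) (x : ℕ) : heightAt ν x ≤ northSteps ν := by
  induction ν generalizing x with
  | nil => cases x <;> simp [heightAt]
  | cons s ν ih =>
    rcases x with _ | x
    · simp
    · cases s
      · simpa [heightAt, northSteps] using ih x
      · simpa [heightAt, northSteps] using ih (x + 1)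

theorem heightAt_mono (hxx' : x ≤ x') (hx' : x' ≤ eastSteps ν) :
    heightAt ν x ≤ heightAt ν x' := by
  induction ν generalizing x x' with
  | nil => simp_all [eastSteps]
  | cons s ν ih =>
    rcases x with _ | x
    · simp
    obtain ⟨x', rfl⟩ : ∃ k, x' = k + 1 := ⟨x' - 1, by omega⟩
    cases s
    · exact ih (by omega) (by simpa [eastSteps] using hx')
    · exact Nat.succ_le_succ (ih hxx' (by simpa [eastSteps] using hx'))

theorem pointAt_add (hx : x ≤ eastSteps ν) (hy : y ≤ northSteps ν) (hxy : heightAt ν x ≤ y)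
    (hyx : x < eastSteps ν → y ≤ heightAt ν (x + 1)) : pointAt ν (x + y) = (x, y) := by
  induction ν generalizing x y with
  | nil =>
    simp only [eastSteps, northSteps, List.count_nil, Nat.le_zero] at hx hy
    simp [pointAt, hx, hy]
  | cons s ν ih =>
    cases s
    · rcases x with _ | x
      · have : y = 0 := by simpa [eastSteps, heightAt] using hyx
        simp [pointAt, this]
      · have := ih (x := x) (y := y) (by simpa [eastSteps] using hx)
          (by simpa [northSteps] using hy) hxy (by simpa [eastSteps, heightAt] using hyx)
        simpa [pointAt, Nat.add_right_comm] using this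
    · rcases y with _ | y
      · obtain rfl : x = 0 := by
          rcases x with _ | x
          · rfl
          · simp [heightAt] at hxy
        simp [pointAt]
      · have := ih (x := x) (y := y) (by simpa [eastSteps] using hx)
          (by simpa [northSteps] using hy) (by cases x <;> simp_all [heightAt])
          (by simpa [eastSteps, heightAt] using hyx)
        simpa [pointAt, ← Nat.add_assoc] using this

/-- Abscissa of the last point of `A_ν` in the row `y`. -/
def rowEnd (ν : List Bool) (y : ℕ) : ℕ :=
  Nat.findGreatest (fun x => heightAt ν x ≤ y) (eastSteps ν)

theorem rowEnd_le_eastSteps (ν : List Bool) (y : ℕ) : rowEnd ν y ≤ eastSteps ν :=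
  Nat.findGreatest_le _

theorem heightAt_rowEnd_le (ν : List Bool) (y : ℕ) : heightAt ν (rowEnd ν y) ≤ y :=
  Nat.findGreatest_spec (P := fun x => heightAt ν x ≤ y) (Nat.zero_le _) (by simp)

theorem le_rowEnd (hx : x ≤ eastSteps ν) (hxy : heightAt ν x ≤ y) : x ≤ rowEnd ν y :=
  Nat.le_findGreatest hx hxy

theorem lt_heightAt_rowEnd_add_one (h : rowEnd ν y < eastSteps ν) :
    y < heightAt ν (rowEnd ν y + 1) := by
  by_contra! hle
  exact absurd (le_rowEnd h hle) (by omega)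

theorem rowEnd_eq (hx : x ≤ eastSteps ν) (hxy : heightAt ν x ≤ y)
    (hyx : x < eastSteps ν → y < heightAt ν (x + 1)) : rowEnd ν y = x := by
  refine le_antisymm ?_ (le_rowEnd hx hxy)
  by_contra! hlt
  have hm := rowEnd_le_eastSteps ν y
  have hy := heightAt_rowEnd_le ν y
  have hmono := heightAt_mono (Nat.add_one_le_iff.2 hlt) hm
  exact absurd (hyx (by omega)) (by omega)

theorem rowEnd_northSteps (ν : List Bool) : rowEnd ν (northSteps ν) = eastSteps ν :=
  rowEnd_eq le_rfl (heightAt_le_northSteps ν _) fun h => absurd h (lt_irrefl _)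

theorem pointAt_add_heightAt (hx : x ≤ eastSteps ν) :
    pointAt ν (x + heightAt ν x) = (x, heightAt ν x) :=
  pointAt_add hx (heightAt_le_northSteps ν x) le_rfl fun h => heightAt_mono (Nat.le_succ x) h

theorem pointAt_add_heightAt_succ (hx : x + 1 ≤ eastSteps ν) :
    pointAt ν (x + heightAt ν (x + 1)) = (x, heightAt ν (x + 1)) :=
  pointAt_add (by omega) (heightAt_le_northSteps ν _) (heightAt_mono (Nat.le_succ x) hx)
    fun _ => le_rfl

theorem pointAt_rowEnd_add (hy : y ≤ northSteps ν) :
    pointAt ν (rowEnd ν y + y) = (rowEnd ν y, y) :=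
  pointAt_add (rowEnd_le_eastSteps ν y) hy (heightAt_rowEnd_le ν y)
    fun h => (lt_heightAt_rowEnd_add_one h).le

theorem pointAt_rowEnd_add_succ_fst (hy : y ≤ northSteps ν) :
    (pointAt ν (rowEnd ν y + y + 1)).1 = rowEnd ν y := by
  rcases hy.lt_or_eq with hlt | rfl
  · rw [Nat.add_assoc, pointAt_add (rowEnd_le_eastSteps ν y) hlt
      ((heightAt_rowEnd_le ν y).trans y.le_succ) lt_heightAt_rowEnd_add_one]
  · have hlen : ν.length ≤ eastSteps ν + northSteps ν + 1 := by
      rw [eastSteps, northSteps, List.count_false_add_count_true]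
      exact Nat.le_succ _
    rw [rowEnd_northSteps, pointAt, List.take_of_length_le hlen, eastSteps]

end LatticePath

section Consecutive

variable {S : Set ℕ} {a b c : ℕ}

/-- `a < b` are consecutive elements of `S`. Applied to the rows and columns of a ν-tree, this
is the adjacency of its nodes. -/
structure Consecutive (S : Set ℕ) (a b : ℕ) : Prop where
  left_mem : a ∈ S
  right_mem : b ∈ S
  lt : a < b
  notMem_of_lt_of_lt : ∀ c, a < c → c < b → c ∉ S

theorem Consecutive.le_left (h : Consecutive S a b) (hc : c ∈ S) (hcb : c < b) : c ≤ a :=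
  not_lt.1 fun hac => h.notMem_of_lt_of_lt c hac hcb hc

theorem Consecutive.right_le (h : Consecutive S a b) (hc : c ∈ S) (hac : a < c) : b ≤ c :=
  not_lt.1 fun hcb => h.notMem_of_lt_of_lt c hac hcb hc

theorem exists_consecutive_right (ha : a ∈ S) (hb : b ∈ S) (hab : a < b) :
    ∃ c, Consecutive S a c := by
  have hex : ∃ c, a < c ∧ c ∈ S := ⟨b, hab, hb⟩
  obtain ⟨hlt, hmem⟩ := Nat.find_spec hex
  exact ⟨_, ha, hmem, hlt, fun c hac hc hcS => Nat.find_min hex hc ⟨hac, hcS⟩⟩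

theorem exists_consecutive_left (ha : a ∈ S) (hb : b ∈ S) (hab : a < b) :
    ∃ c, Consecutive S c b := by
  obtain ⟨hmem, hlt⟩ :=
    Nat.findGreatest_spec (P := fun c => c ∈ S ∧ c < b) hab.le ⟨ha, hab⟩
  exact ⟨_, hmem, hb, hlt, fun c hc hcb hcS => Nat.findGreatest_is_greatest hc hcb.le ⟨hcS, hcb⟩⟩

end Consecutive

/-! ### Faces and ν-trees -/

/-- The heights of the points of `T` in the column of abscissa `x`. -/
def column (T : Set (ℕ × ℕ)) (x : ℕ) : Set ℕ := {y | (x, y) ∈ T}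

/-- The abscissae of the points of `T` in the row of height `y`. -/
def row (T : Set (ℕ × ℕ)) (y : ℕ) : Set ℕ := {x | (x, y) ∈ T}

/-- Height of the highest point of `T` in column `x`; it is `0` if the column is empty. -/
noncomputable def colTop (T : Set (ℕ × ℕ)) (x : ℕ) : ℕ := sSup (column T x)

/-- A face of the ν-Tamari complex: a set of pairwise ν-compatible points of `A_ν`. -/
def IsNuFace (ν : List Bool) (T : Set (ℕ × ℕ)) : Prop :=
  T ⊆ APts ν ∧ T.Pairwise (Compatible ν)

section Face

variable {ν : List Bool} {T : Set (ℕ × ℕ)} {x x' y y' : ℕ}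

theorem Incompatible.symm {p q : ℕ × ℕ} (h : Incompatible ν p q) : Incompatible ν q p :=
  Or.symm h

theorem incompatible_iff (hp : (x, y) ∈ APts ν) (hq : (x', y') ∈ APts ν) :
    Incompatible ν (x, y) (x', y') ↔
      x < x' ∧ y < y' ∧ heightAt ν x' ≤ y ∨ x' < x ∧ y' < y ∧ heightAt ν x ≤ y' :=
  or_congr (and_congr_right' (and_congr_right' ⟨fun h => h.2.1, fun h => ⟨hq.1, h, hp.2.2⟩⟩))
    (and_congr_right' (and_congr_right' ⟨fun h => h.2.1, fun h => ⟨hp.1, h, hq.2.2⟩⟩))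

theorem isNuFace_iff : IsNuFace ν T ↔ T ⊆ APts ν ∧ ∀ x y x' y', (x, y) ∈ T → (x', y') ∈ T →
    x < x' → heightAt ν x' ≤ y → y' ≤ y := by
  refine and_congr_right fun hsub => ⟨fun h x y x' y' hp hq hx hh => ?_, fun h => ?_⟩
  · by_contra! hy
    exact h hp hq (fun he => hx.ne (congrArg Prod.fst he))
      ((incompatible_iff (hsub hp) (hsub hq)).2 (.inl ⟨hx, hy, hh⟩))
  · rintro ⟨x, y⟩ hp ⟨x', y'⟩ hq - hpq
    rcases (incompatible_iff (hsub hp) (hsub hq)).1 hpq with ⟨hx, hy, hh⟩ | ⟨hx, hy, hh⟩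
    · exact absurd (h x y x' y' hp hq hx hh) (not_le.2 hy)
    · exact absurd (h x' y' x y hq hp hx hh) (not_le.2 hy)

namespace IsNuFace

theorem bounds (hT : IsNuFace ν T) (hp : (x, y) ∈ T) :
    x ≤ eastSteps ν ∧ heightAt ν x ≤ y ∧ y ≤ northSteps ν :=
  hT.1 hp

theorem snd_le (hT : IsNuFace ν T) (hp : (x, y) ∈ T) (hq : (x', y') ∈ T) (hx : x < x')
    (hh : heightAt ν x' ≤ y) : y' ≤ y :=
  (isNuFace_iff.1 hT).2 x y x' y' hp hq hx hh

theorem finite (hT : IsNuFace ν T) : T.Finite :=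
  ((Set.finite_Iic (eastSteps ν)).prod (Set.finite_Iic (northSteps ν))).subset
    fun _ hp => ⟨(hT.1 hp).1, (hT.1 hp).2.2⟩

theorem isGreatest_colTop (hT : IsNuFace ν T) (hp : (x, y) ∈ T) :
    IsGreatest (column T x) (colTop T x) :=
  have hbdd : BddAbove (column T x) := ⟨northSteps ν, fun _ hb => (hT.bounds hb).2.2⟩
  ⟨Nat.sSup_mem ⟨y, hp⟩ hbdd, fun _ hb => le_csSup hbdd hb⟩

theorem snd_le_of_mem_left (hT : IsNuFace ν T) (hx : x < x') (hp : (x, y) ∈ T)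
    (hq : (x', y) ∈ T) (hr : (x', y') ∈ T) : y' ≤ y :=
  hT.snd_le hp hr hx (hT.bounds hq).2.1

theorem colTop_eq_of_mem_left (hT : IsNuFace ν T) (hx : x < x') (hp : (x, y) ∈ T)
    (hq : (x', y) ∈ T) : colTop T x' = y :=
  IsGreatest.csSup_eq ⟨hq, fun _ hr => hT.snd_le_of_mem_left hx hp hq hr⟩

theorem colTop_eq_zero (hT : IsNuFace ν T) (hx : eastSteps ν < x) : colTop T x = 0 := by
  have : column T x = ∅ :=
    Set.eq_empty_of_forall_notMem fun y hy => absurd (hT.bounds hy).1 (not_le.2 hx)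
  rw [colTop, this, csSup_empty, Nat.bot_eq_zero]

theorem le_eastSteps_of_lt_colTop (hT : IsNuFace ν T) (h : y < colTop T x) : x ≤ eastSteps ν :=
  not_lt.1 fun hx => Nat.not_lt_zero y (hT.colTop_eq_zero hx ▸ h)

end IsNuFace

end Face

section Tree

variable {ν : List Bool} {T T' : Set (ℕ × ℕ)} {x a b y : ℕ}

theorem isNuTree_iff : IsNuTree ν T ↔ IsNuFace ν T ∧ ∀ x y, (x, y) ∈ APts ν → (x, y) ∉ T →
    ∃ a b, (a, b) ∈ T ∧
      (x < a ∧ y < b ∧ heightAt ν a ≤ y ∨ a < x ∧ b < y ∧ heightAt ν x ≤ b) := by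
  constructor
  · rintro ⟨hsub, hcomp, hmax⟩
    refine ⟨⟨hsub, hcomp⟩, fun x y hp hpT => ?_⟩
    by_contra! hall
    have hcomp' (q) (hq : q ∈ T) : ¬ Incompatible ν (x, y) q := fun h =>
      ((incompatible_iff hp (hsub hq)).1 h).elim
        (fun ⟨h₁, h₂, h₃⟩ => absurd ((hall _ _ hq).1 h₁ h₂) (not_lt.2 h₃))
        fun ⟨h₁, h₂, h₃⟩ => absurd ((hall _ _ hq).2 h₁ h₂) (not_lt.2 h₃)
    have hins : (insert (x, y) T).Pairwise (Compatible ν) :=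
      hcomp.insert fun q hq _ => ⟨hcomp' q hq, fun h => hcomp' q hq h.symm⟩
    have := hmax _ (Set.insert_subset hp hsub) hins (Set.subset_insert _ T)
    exact hpT (this ▸ Set.mem_insert _ T)
  · rintro ⟨⟨hsub, hcomp⟩, hmax⟩
    refine ⟨hsub, hcomp, fun T' hsub' hcomp' hTT' =>
      Set.Subset.antisymm (fun ⟨x, y⟩ hp => ?_) hTT'⟩
    by_contra hpT
    obtain ⟨a, b, hq, hpq⟩ := hmax x y (hsub' hp) hpT
    exact hcomp' hp (hTT' hq) (fun h => hpT (h ▸ hq))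
      ((incompatible_iff (hsub' hp) (hsub hq)).2 hpq)

namespace IsNuTree

theorem isNuFace (hT : IsNuTree ν T) : IsNuFace ν T := ⟨hT.1, hT.2.1⟩

theorem exists_incompatible (hT : IsNuTree ν T) (hx : x ≤ eastSteps ν) (hxy : heightAt ν x ≤ y)
    (hy : y ≤ northSteps ν) (hp : (x, y) ∉ T) :
    ∃ a b, (a, b) ∈ T ∧ (x < a ∧ y < b ∧ heightAt ν a ≤ y ∨ a < x ∧ b < y ∧ heightAt ν x ≤ b) :=
  (isNuTree_iff.1 hT).2 x y ⟨hx, hxy, hy⟩ hp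

theorem root_mem (hT : IsNuTree ν T) : (0, northSteps ν) ∈ T := by
  by_contra hroot
  obtain ⟨a, b, hq, h⟩ := hT.exists_incompatible (Nat.zero_le _) (by simp) le_rfl hroot
  have := hT.isNuFace.bounds hq
  omega

theorem exists_mem_col_mem_left (hT : IsNuTree ν T) (hx0 : 0 < x) (hx : x ≤ eastSteps ν) :
    ∃ y, (x, y) ∈ T ∧ ∃ a < x, (a, y) ∈ T := by
  have hex : ∃ y, heightAt ν x ≤ y ∧ ∃ a < x, (a, y) ∈ T :=
    ⟨northSteps ν, heightAt_le_northSteps ν x, 0, hx0, hT.root_mem⟩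
  obtain ⟨y, ⟨hxy, a, hax, ha⟩, hmin⟩ : ∃ y, (heightAt ν x ≤ y ∧ ∃ a < x, (a, y) ∈ T) ∧
      ∀ b < y, ¬ (heightAt ν x ≤ b ∧ ∃ a < x, (a, b) ∈ T) :=
    ⟨Nat.find hex, Nat.find_spec hex, fun _ hb => Nat.find_min hex hb⟩
  refine ⟨y, ?_, a, hax, ha⟩
  by_contra hp
  obtain ⟨c, d, hq, ⟨hxc, hyd, hc⟩ | ⟨hcx, hdy, hd⟩⟩ :=
    hT.exists_incompatible hx hxy (hT.isNuFace.bounds ha).2.2 hp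
  · exact absurd (hT.isNuFace.snd_le ha hq (hax.trans hxc) hc) (not_le.2 hyd)
  · exact hmin d hdy ⟨hd, c, hcx, hq⟩

theorem colTop_mem (hT : IsNuTree ν T) (hx : x ≤ eastSteps ν) : (x, colTop T x) ∈ T := by
  obtain ⟨y, hy⟩ : ∃ y, (x, y) ∈ T := by
    rcases x.eq_zero_or_pos with rfl | hx0
    · exact ⟨_, hT.root_mem⟩
    · exact (hT.exists_mem_col_mem_left hx0 hx).imp fun _ h => h.1
  exact (hT.isNuFace.isGreatest_colTop hy).1

theorem colTop_zero (hT : IsNuTree ν T) : colTop T 0 = northSteps ν :=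
  IsGreatest.csSup_eq ⟨hT.root_mem, fun _ hb => (hT.isNuFace.bounds hb).2.2⟩

theorem exists_lower_of_row_gap (hT : IsNuTree ν T) (hp : (x, y) ∈ T) (hxa : x < a)
    (ha : a ≤ eastSteps ν) (hay : heightAt ν a ≤ y) (hgap : ∀ c, x < c → c ≤ a → (c, y) ∉ T) :
    ∃ b < y, (x, b) ∈ T ∧ heightAt ν a ≤ b := by
  induction a using Nat.strong_induction_on with
  | _ a ih =>
  have hF := hT.isNuFace
  obtain ⟨c, d, hq, ⟨hac, hyd, hc⟩ | ⟨hca, hdy, had⟩⟩ :=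
    hT.exists_incompatible ha hay (hF.bounds hp).2.2 (hgap a hxa le_rfl)
  · exact absurd (hF.snd_le hp hq (hxa.trans hac) hc) (not_le.2 hyd)
  rcases lt_trichotomy c x with hcx | rfl | hxc
  · exact absurd (hF.snd_le hq hp hcx ((heightAt_mono hxa.le ha).trans had)) (not_le.2 hdy)
  · exact ⟨d, hdy, hq, had⟩
  · have hcd := (hF.bounds hq).2.1
    obtain ⟨b, hby, hb, hcb⟩ := ih c hca hxc (by omega) (by omega)
      fun c' h h' => hgap c' h (by omega)
    exact ⟨b, hby, hb, had.trans (hF.snd_le hb hq hxc hcb)⟩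

theorem exists_right_of_col_gap (hT : IsNuTree ν T) (hp : (x, y) ∈ T) (hxb : heightAt ν x ≤ b)
    (hby : b < y) (hgap : ∀ c, b ≤ c → c < y → (x, c) ∉ T) :
    ∃ a > x, (a, y) ∈ T ∧ heightAt ν a ≤ b := by
  induction hk : y - b using Nat.strong_induction_on generalizing b with
  | _ k ih =>
  have hF := hT.isNuFace
  obtain ⟨hx, -, hy⟩ := hF.bounds hp
  obtain ⟨c, d, hq, ⟨hxc, hbd, hcb⟩ | ⟨hcx, hdb, hxd⟩⟩ :=
    hT.exists_incompatible hx hxb (hby.le.trans hy) (hgap b le_rfl hby)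
  · rcases (hF.snd_le hp hq hxc (by omega)).lt_or_eq with hdy | rfl
    · obtain ⟨a, hxa, ha, had⟩ := ih (y - d) (by omega) (by omega) hdy
        (fun c' h h' => hgap c' (by omega) h') rfl
      have hac : a ≤ c := by
        by_contra! hca
        exact absurd (hF.snd_le hq ha hca had) (not_le.2 hdy)
      exact ⟨a, hxa, ha, (heightAt_mono hac (hF.bounds hq).1).trans hcb⟩
    · exact ⟨c, hxc, hq, hcb⟩
  · exact absurd (hF.snd_le hq hp hcx hxd) (by omega)

theorem eq_of_colTop_eq (hT : IsNuTree ν T) (hT' : IsNuTree ν T') (h : colTop T = colTop T') :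
    T = T' := by
  have hF := hT.isNuFace
  refine (hT.2.2 T' hT'.1 hT'.2.1 fun ⟨x, y⟩ hp => ?_).symm
  obtain ⟨hx, hxy, hy⟩ := hF.bounds hp
  by_contra hp'
  obtain ⟨a, b, hq, ⟨hxa, hyb, hay⟩ | ⟨hax, hby, hxb⟩⟩ := hT'.exists_incompatible hx hxy hy hp'
  · have hb : b ≤ colTop T a := h ▸ (hT'.isNuFace.isGreatest_colTop hq).2 hq
    have ha := hT.colTop_mem (hT'.isNuFace.bounds hq).1
    exact absurd (hF.snd_le hp ha hxa hay) (by omega)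
  · have hb : y ≤ colTop T' x := h ▸ (hF.isGreatest_colTop hp).2 hp
    exact absurd (hT'.isNuFace.snd_le hq (hT'.colTop_mem hx) hax hxb) (by omega)

end IsNuTree

end Tree

/-! ### The bracket vector in terms of column tops -/

section BracketVector

variable {ν : List Bool} {T T' : Set (ℕ × ℕ)} {x a b y : ℕ}

/-- The `i`-th entry of the bracket vector of a ν-tree `T`, read off the `i`-th step of `ν`:
an east step arriving at abscissa `x` contributes `colTop T x`; a north step, or the end of `ν`,
contributes the height at which it starts. -/
noncomputable def bracketEntry (ν : List Bool) (T : Set (ℕ × ℕ)) (i : ℕ) : ℕ :=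
  if (pointAt ν (i + 1)).1 = (pointAt ν i).1 then (pointAt ν i).2
  else colTop T (pointAt ν (i + 1)).1

theorem bracketEntry_add_heightAt (hx : x + 1 ≤ eastSteps ν) :
    bracketEntry ν T (x + heightAt ν (x + 1)) = colTop T (x + 1) := by
  rw [bracketEntry, Nat.add_right_comm, pointAt_add_heightAt hx, pointAt_add_heightAt_succ hx,
    if_neg (Nat.succ_ne_self x)]

theorem bracketEntry_rowEnd_add (hy : y ≤ northSteps ν) :
    bracketEntry ν T (rowEnd ν y + y) = y := by
  rw [bracketEntry, pointAt_rowEnd_add_succ_fst hy, pointAt_rowEnd_add hy, if_pos rfl]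

theorem bracketEntry_mono (h : colTop T ≤ colTop T') (i : ℕ) :
    bracketEntry ν T i ≤ bracketEntry ν T' i := by
  unfold bracketEntry
  split_ifs
  · exact le_rfl
  · exact h _

theorem leftChild_eq_none (h : ∀ b < y, (x, b) ∉ T) : leftChild T (x, y) = none :=
  if_neg fun ⟨b, hb, hby⟩ => h b hby hb

theorem leftChild_eq_some (h : Consecutive (column T x) b y) :
    leftChild T (x, y) = some (x, b) := by
  have hsup : sSup {c | (x, c) ∈ T ∧ c < y} = b :=
    IsGreatest.csSup_eq ⟨⟨h.left_mem, h.lt⟩, fun _ hc => h.le_left hc.1 hc.2⟩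
  rw [leftChild, if_pos ⟨b, h.left_mem, h.lt⟩, hsup]

theorem rightChild_eq_none (h : ∀ a > x, (a, y) ∉ T) : rightChild T (x, y) = none :=
  if_neg fun ⟨a, ha, hxa⟩ => h a hxa ha

theorem IsNuFace.rightChild_eq_some (hT : IsNuFace ν T) (h : Consecutive (row T y) x a) :
    rightChild T (x, y) = some (a, y) := by
  have hinf : sInf {c | (c, y) ∈ T ∧ x < c} = a :=
    IsLeast.csInf_eq ⟨⟨h.right_mem, h.lt⟩, fun _ hc => h.right_le hc.1 hc.2⟩
  have habove : ¬ ∃ b, (a, b) ∈ T ∧ y < b := fun ⟨b, hb, hyb⟩ =>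
    absurd (hT.snd_le_of_mem_left h.lt h.left_mem h.right_mem hb) (not_le.2 hyb)
  rw [rightChild, if_pos ⟨a, h.right_mem, h.lt⟩, hinf, if_neg habove]

theorem forall_notMem_or_exists_consecutive_lower (hp : (x, y) ∈ T) :
    (∀ b < y, (x, b) ∉ T) ∨ ∃ b, Consecutive (column T x) b y := by
  by_contra! h
  obtain ⟨⟨b, hby, hb⟩, h⟩ := h
  exact (exists_consecutive_left (S := column T x) hb hp hby).elim h

theorem forall_notMem_or_exists_consecutive_right (hp : (x, y) ∈ T) :
    (∀ a > x, (a, y) ∉ T) ∨ ∃ a, Consecutive (row T y) x a := by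
  by_contra! h
  obtain ⟨⟨a, hxa, ha⟩, h⟩ := h
  exact (exists_consecutive_right (S := row T y) hp ha hxa).elim h

namespace IsNuTree

theorem rowEnd_and_heightAt_of_leaf (hT : IsNuTree ν T) (hp : (x, y) ∈ T)
    (hlow : ∀ b < y, (x, b) ∉ T) (hright : ∀ a > x, (a, y) ∉ T) :
    rowEnd ν y = x ∧ heightAt ν x = y := by
  obtain ⟨hx, hxy, -⟩ := hT.isNuFace.bounds hp
  constructor
  · refine rowEnd_eq hx hxy fun hlt => ?_
    by_contra! hle
    obtain ⟨b, hby, hb, -⟩ := hT.exists_lower_of_row_gap hp x.lt_succ_self hlt hle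
      fun c hc _ => hright c hc
    exact hlow b hby hb
  · by_contra hne
    obtain ⟨a, hxa, ha, -⟩ := hT.exists_right_of_col_gap hp le_rfl (by omega)
      fun c _ hc => hlow c hc
    exact hright a hxa ha

theorem eq_add_one_and_heightAt_eq_of_right (hT : IsNuTree ν T) (hlow : ∀ b < y, (x, b) ∉ T)
    (hright : Consecutive (row T y) x a) : a = x + 1 ∧ heightAt ν a = heightAt ν x := by
  have hF := hT.isNuFace
  obtain ⟨ha, hay, -⟩ := hF.bounds hright.right_mem
  have hxa := hright.lt
  obtain rfl : a = x + 1 := by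
    by_contra hne
    obtain ⟨b, hby, hb, -⟩ := hT.exists_lower_of_row_gap hright.left_mem x.lt_succ_self
      (by omega) ((heightAt_mono hxa ha).trans hay)
      fun c hc hcx => hright.notMem_of_lt_of_lt c hc (by omega)
    exact hlow b hby hb
  refine ⟨rfl, le_antisymm ?_ (heightAt_mono hxa.le ha)⟩
  by_contra! hlt
  obtain ⟨c, hxc, hc, hcx⟩ := hT.exists_right_of_col_gap hright.left_mem le_rfl (by omega)
    fun d _ hd => hlow d hd
  exact absurd (heightAt_mono (Nat.add_one_le_iff.2 hxc) (hF.bounds hc).1) (by omega)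

theorem heightAt_le_of_row_gap (hT : IsNuTree ν T) (hlow : Consecutive (column T x) b y)
    (hxa : x ≤ a) (ha : a ≤ eastSteps ν) (hay : heightAt ν a ≤ y)
    (hgap : ∀ c, x < c → c ≤ a → (c, y) ∉ T) : heightAt ν a ≤ b := by
  rcases hxa.lt_or_eq with hlt | rfl
  · obtain ⟨c, hcy, hc, hac⟩ := hT.exists_lower_of_row_gap hlow.right_mem hlt ha hay hgap
    exact hac.trans (hlow.le_left hc hcy)
  · exact (hT.isNuFace.bounds hlow.left_mem).2.1

theorem exists_right_of_consecutive (hT : IsNuTree ν T) (hlow : Consecutive (column T x) b y)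
    (hby : b + 1 < y) : ∃ a > x, (a, y) ∈ T ∧ heightAt ν a ≤ b + 1 :=
  hT.exists_right_of_col_gap hlow.right_mem
    ((hT.isNuFace.bounds hlow.left_mem).2.1.trans b.le_succ) hby
    fun c hc => hlow.notMem_of_lt_of_lt c hc

theorem add_one_eq_and_rowEnd_eq_of_lower (hT : IsNuTree ν T)
    (hlow : Consecutive (column T x) b y) (hright : ∀ a > x, (a, y) ∉ T) :
    b + 1 = y ∧ rowEnd ν b = rowEnd ν y := by
  have hby := hlow.lt
  obtain ⟨hx, hxy, -⟩ := hT.isNuFace.bounds hlow.right_mem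
  have hyb : heightAt ν (rowEnd ν y) ≤ b :=
    hT.heightAt_le_of_row_gap hlow (le_rowEnd hx hxy) (rowEnd_le_eastSteps ν y)
      (heightAt_rowEnd_le ν y) fun c hc _ => hright c hc
  refine ⟨?_, rowEnd_eq (rowEnd_le_eastSteps ν y) hyb fun hlt =>
    hby.trans (lt_heightAt_rowEnd_add_one hlt)⟩
  by_contra hne
  obtain ⟨a, hxa, ha, -⟩ := hT.exists_right_of_consecutive hlow (by omega)
  exact hright a hxa ha

theorem rowEnd_add_one_eq_and_heightAt_eq (hT : IsNuTree ν T)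
    (hlow : Consecutive (column T x) b y) (hright : Consecutive (row T y) x a) :
    rowEnd ν b + 1 = a ∧ heightAt ν a = b + 1 := by
  have hF := hT.isNuFace
  have hby := hlow.lt
  have hxa := hright.lt
  obtain ⟨a, rfl⟩ : ∃ k, a = k + 1 := ⟨a - 1, by omega⟩
  obtain ⟨ha, hay, -⟩ := hF.bounds hright.right_mem
  have hba : b < heightAt ν (a + 1) := by
    by_contra! hle
    exact absurd (hF.snd_le hlow.left_mem hright.right_mem hxa hle) (by omega)
  have hab : heightAt ν a ≤ b :=
    hT.heightAt_le_of_row_gap hlow (by omega) (by omega) ((heightAt_mono a.le_succ ha).trans hay)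
      fun c hc hca => hright.notMem_of_lt_of_lt c hc (by omega)
  refine ⟨congrArg (· + 1) (rowEnd_eq (by omega) hab fun _ => hba), le_antisymm ?_ hba⟩
  rcases (Nat.succ_le_of_lt hby).lt_or_eq with hlt | rfl
  · obtain ⟨c, hxc, hc, hcb⟩ := hT.exists_right_of_consecutive hlow hlt
    exact (heightAt_mono (hright.right_le hc hxc) (hF.bounds hc).1).trans hcb
  · exact hay

/-- `i` is the in-order position of the node `(x, y)`: it immediately follows the last position
`rowEnd ν b + b` of the left subtree and precedes the first position `a + heightAt ν a` of the
right one. -/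
theorem exists_position (hT : IsNuTree ν T) (hp : (x, y) ∈ T) : ∃ i,
    (leftChild T (x, y) = none ∧ i = x + heightAt ν x ∨
      ∃ b, Consecutive (column T x) b y ∧ i = rowEnd ν b + b + 1) ∧
    (rightChild T (x, y) = none ∧ i = rowEnd ν y + y ∨
      ∃ a, Consecutive (row T y) x a ∧ i + 1 = a + heightAt ν a) := by
  rcases forall_notMem_or_exists_consecutive_lower hp with hlow | ⟨b, hlow⟩ <;>
    rcases forall_notMem_or_exists_consecutive_right hp with hright | ⟨a, hright⟩
  · have := hT.rowEnd_and_heightAt_of_leaf hp hlow hright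
    exact ⟨_, .inl ⟨leftChild_eq_none hlow, rfl⟩, .inl ⟨rightChild_eq_none hright, by omega⟩⟩
  · have := hT.eq_add_one_and_heightAt_eq_of_right hlow hright
    exact ⟨_, .inl ⟨leftChild_eq_none hlow, rfl⟩, .inr ⟨a, hright, by omega⟩⟩
  · have := hT.add_one_eq_and_rowEnd_eq_of_lower hlow hright
    exact ⟨_, .inr ⟨b, hlow, rfl⟩, .inl ⟨rightChild_eq_none hright, by omega⟩⟩
  · have := hT.rowEnd_add_one_eq_and_heightAt_eq hlow hright
    exact ⟨_, .inr ⟨b, hlow, rfl⟩, .inr ⟨a, hright, by omega⟩⟩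

end IsNuTree

/-- The part of `T` weakly south-east of `(x, y)`, which contains the subtree of that node. Its
cardinality bounds the recursion depth of `inorderAux`. -/
def southEast (T : Set (ℕ × ℕ)) (x y : ℕ) : Set (ℕ × ℕ) := {q ∈ T | x ≤ q.1 ∧ q.2 ≤ y}

theorem IsNuFace.ncard_southEast_lt (hT : IsNuFace ν T) (hp : (x, y) ∈ T) (hxa : x ≤ a)
    (hby : b ≤ y) (hne : x < a ∨ b < y) : (southEast T a b).ncard < (southEast T x y).ncard := by
  refine Set.ncard_lt_ncard ?_ (hT.finite.subset (Set.sep_subset _ _))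
  refine Set.ssubset_iff_exists.2
    ⟨fun q hq => ⟨hq.1, hxa.trans hq.2.1, hq.2.2.trans hby⟩, (x, y), ⟨hp, le_rfl, le_rfl⟩, ?_⟩
  exact fun h => hne.elim (not_lt.2 h.2.1) (not_lt.2 h.2.2)

theorem IsNuFace.add_heightAt_le (hT : IsNuFace ν T) (hp : (x, y) ∈ T) :
    x + heightAt ν x ≤ rowEnd ν y + y :=
  have ⟨hx, hxy, _⟩ := hT.bounds hp
  add_le_add (le_rowEnd hx hxy) hxy

theorem IsNuFace.bracketEntry_eq {i : ℕ} (hT : IsNuFace ν T) (hp : (x, y) ∈ T)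
    (hi : i = rowEnd ν y + y ∨ ∃ a, Consecutive (row T y) x a ∧ i + 1 = a + heightAt ν a) :
    bracketEntry ν T i = y := by
  rcases hi with rfl | ⟨a, ha, hia⟩
  · exact bracketEntry_rowEnd_add (hT.bounds hp).2.2
  · have hxa := ha.lt
    obtain ⟨a, rfl⟩ : ∃ k, a = k + 1 := ⟨a - 1, by omega⟩
    obtain rfl : i = a + heightAt ν (a + 1) := by omega
    rw [bracketEntry_add_heightAt (hT.bounds ha.right_mem).1]
    exact hT.colTop_eq_of_mem_left hxa ha.left_mem ha.right_mem

theorem inorderAux_succ (T : Set (ℕ × ℕ)) (fuel : ℕ) (p : ℕ × ℕ) : inorderAux T (fuel + 1) p =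
    (leftChild T p).elim [] (inorderAux T fuel) ++
      p :: (rightChild T p).elim [] (inorderAux T fuel) := by
  rw [inorderAux]
  cases leftChild T p <;> cases rightChild T p <;> rfl

theorem Ico_append_cons_Ico {i j k : ℕ} (hij : i ≤ j) (hjk : j < k) :
    List.Ico i j ++ j :: List.Ico (j + 1) k = List.Ico i k := by
  rw [← List.Ico.eq_cons hjk, List.Ico.append_consecutive hij hjk.le]

theorem IsNuTree.map_snd_inorderAux (hT : IsNuTree ν T) {fuel : ℕ} (hp : (x, y) ∈ T)
    (hfuel : (southEast T x y).ncard ≤ fuel) : (inorderAux T fuel (x, y)).map Prod.snd =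
      (List.Ico (x + heightAt ν x) (rowEnd ν y + y + 1)).map (bracketEntry ν T) := by
  have hF := hT.isNuFace
  induction fuel generalizing x y with
  | zero =>
    exact absurd ((hF.ncard_southEast_lt hp x.le_succ le_rfl (.inl x.lt_succ_self)).trans_le hfuel)
      (Nat.not_lt_zero _)
  | succ fuel ih =>
    have ih' {a b : ℕ} (hq : (a, b) ∈ T) (hxa : x ≤ a) (hby : b ≤ y) (hne : x < a ∨ b < y) :=
      ih hq (Nat.le_of_lt_succ ((hF.ncard_southEast_lt hp hxa hby hne).trans_le hfuel))
    obtain ⟨i, hleft, hright⟩ := hT.exists_position hp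
    have hi : bracketEntry ν T i = y := hF.bracketEntry_eq hp (hright.imp_left And.right)
    have hl : x + heightAt ν x ≤ i ∧
        ((leftChild T (x, y)).elim [] (inorderAux T fuel)).map Prod.snd =
          (List.Ico (x + heightAt ν x) i).map (bracketEntry ν T) := by
      rcases hleft with ⟨hnone, rfl⟩ | ⟨b, hb, rfl⟩
      · simp [hnone]
      · rw [leftChild_eq_some hb]
        exact ⟨(hF.add_heightAt_le hb.left_mem).trans (Nat.le_succ _),
          ih' hb.left_mem le_rfl hb.lt.le (.inr hb.lt)⟩
    have hr : i < rowEnd ν y + y + 1 ∧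
        ((rightChild T (x, y)).elim [] (inorderAux T fuel)).map Prod.snd =
          (List.Ico (i + 1) (rowEnd ν y + y + 1)).map (bracketEntry ν T) := by
      rcases hright with ⟨hnone, rfl⟩ | ⟨a, ha, hia⟩
      · simp [hnone]
      · rw [hF.rightChild_eq_some ha, hia]
        have := hF.add_heightAt_le ha.right_mem
        exact ⟨by omega, ih' ha.right_mem ha.lt.le le_rfl (.inl ha.lt)⟩
    rw [inorderAux_succ, ← Ico_append_cons_Ico hl.1 hr.1, List.map_append, List.map_append,
      List.map_cons, List.map_cons, hl.2, hr.2, hi]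

theorem IsNuTree.bracketOfTree_eq (hT : IsNuTree ν T) :
    bracketOfTree ν T = (List.range (ν.length + 1)).map (bracketEntry ν T) := by
  have hlen : rowEnd ν (northSteps ν) + northSteps ν = ν.length := by
    rw [rowEnd_northSteps, eastSteps, northSteps, List.count_false_add_count_true]
  have hcard : (southEast T 0 (northSteps ν)).ncard ≤ T.ncard :=
    Set.ncard_le_ncard (Set.sep_subset _ _) hT.isNuFace.finite
  rw [bracketOfTree, hT.map_snd_inorderAux hT.root_mem hcard, hlen, heightAt_zero, add_zero,
    List.Ico.zero_bot]

theorem listLE_map_range_iff {k : ℕ} {f g : ℕ → ℕ} :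
    listLE ((List.range k).map f) ((List.range k).map g) ↔ ∀ i < k, f i ≤ g i := by
  simp only [listLE, List.length_map, true_and, List.getD_eq_getElem?_getD, List.getElem?_map]
  refine forall_congr' fun i => ?_
  rcases lt_or_ge i k with hi | hi
  · simp [hi]
  · simp [not_lt.2 hi]

theorem listLE_bracketOfTree_iff (hT : IsNuTree ν T) (hT' : IsNuTree ν T') :
    listLE (bracketOfTree ν T) (bracketOfTree ν T') ↔ colTop T ≤ colTop T' := by
  rw [hT.bracketOfTree_eq, hT'.bracketOfTree_eq, listLE_map_range_iff]
  refine ⟨fun h c => ?_, fun h i _ => bracketEntry_mono h i⟩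
  rcases c with _ | c
  · rw [hT.colTop_zero, hT'.colTop_zero]
  rcases lt_or_ge (eastSteps ν) (c + 1) with hc | hc
  · exact (hT.isNuFace.colTop_eq_zero hc).trans_le (Nat.zero_le _)
  · have hlen : c + heightAt ν (c + 1) < ν.length + 1 := by
      have := heightAt_le_northSteps ν (c + 1)
      have : eastSteps ν + northSteps ν = ν.length := List.count_false_add_count_true ν
      omega
    simpa only [bracketEntry_add_heightAt hc] using h _ hlen

theorem bracketOfTree_eq_iff (hT : IsNuTree ν T) (hT' : IsNuTree ν T') :
    bracketOfTree ν T = bracketOfTree ν T' ↔ T = T' := by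
  refine ⟨fun h => ?_, fun h => h ▸ rfl⟩
  have hrefl : listLE (bracketOfTree ν T) (bracketOfTree ν T) := ⟨rfl, fun _ => le_rfl⟩
  exact hT.eq_of_colTop_eq hT' (le_antisymm
    ((listLE_bracketOfTree_iff hT hT').1 (h ▸ hrefl))
    ((listLE_bracketOfTree_iff hT' hT).1 (h ▸ hrefl)))

end BracketVector

/-! ### Right rotations -/

section Rotation

variable {ν : List Bool} {T T' S : Set (ℕ × ℕ)} {x x' y y' a b c : ℕ}

/-- The set obtained from `T` by moving `(x, y)` to the opposite corner `(x', y')`: the right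
rotation of `T` at `(x, y)` when `(x, y')` and `(x', y)` are the nodes adjacent to `(x, y)` above
it and to its right. -/
def rotate (T : Set (ℕ × ℕ)) (x y x' y' : ℕ) : Set (ℕ × ℕ) := (T \ {(x, y)}) ∪ {(x', y')}

theorem mem_rotate : (a, b) ∈ rotate T x y x' y' ↔
    ((a, b) ∈ T ∧ ¬ (a = x ∧ b = y)) ∨ (a = x' ∧ b = y') := by
  simp only [rotate, Set.mem_union, Set.mem_sdiff, Set.mem_singleton_iff, Prod.mk.injEq]

theorem isRightRotation_iff (hT : IsNuFace ν T) : IsRightRotation T S ↔ ∃ x y x' y',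
    Consecutive (column T x) y y' ∧ Consecutive (row T y) x x' ∧ S = rotate T x y x' y' := by
  constructor
  · rintro ⟨-, -, x, y, x', y', rfl, rfl, hx, hy, hp, hu, hr, hcol, hrow, -, -, hS⟩
    exact ⟨x, y, x', y', ⟨hp, hu, hy, hcol⟩, ⟨hp, hr, hx, hrow⟩, hS⟩
  · rintro ⟨x, y, x', y', hup, hright, hS⟩
    refine ⟨_, _, x, y, x', y', rfl, rfl, hright.lt, hup.lt, hup.left_mem, hup.right_mem,
      hright.right_mem, hup.notMem_of_lt_of_lt, hright.notMem_of_lt_of_lt, ?_, ?_, hS⟩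
    · exact fun a hxa hax' ha => absurd (hT.snd_le hup.left_mem ha hxa
        ((heightAt_mono hax'.le (hT.bounds hright.right_mem).1).trans
          (hT.bounds hright.right_mem).2.1)) (not_le.2 hup.lt)
    · exact fun b hyb _ hb => absurd
        (hT.snd_le_of_mem_left hright.lt hright.left_mem hright.right_mem hb) (not_le.2 hyb)

theorem IsNuFace.colTop_rotate (hT : IsNuFace ν T) (hup : Consecutive (column T x) y y')
    (hright : Consecutive (row T y) x x') :
    colTop (rotate T x y x' y') = Function.update (colTop T) x' y' := by
  have hx := hright.lt
  have hy := hup.lt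
  funext c
  rcases eq_or_ne c x' with rfl | hc
  · rw [Function.update_self]
    refine IsGreatest.csSup_eq ⟨mem_rotate.2 (.inr ⟨rfl, rfl⟩), fun b hb => ?_⟩
    rcases mem_rotate.1 hb with ⟨hb, -⟩ | ⟨-, rfl⟩
    · exact (hT.snd_le_of_mem_left hx hright.left_mem hright.right_mem hb).trans hy.le
    · exact le_rfl
  rw [Function.update_of_ne hc]
  rcases eq_or_ne c x with rfl | hcx
  · obtain ⟨hmem, htop⟩ := hT.isGreatest_colTop hup.right_mem
    have hne : colTop T c ≠ y := (hy.trans_le (htop hup.right_mem)).ne'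
    refine IsGreatest.csSup_eq ⟨mem_rotate.2 (.inl ⟨hmem, fun h => hne h.2⟩), fun b hb => ?_⟩
    exact (mem_rotate.1 hb).elim (fun h => htop h.1) fun h => absurd h.1 hc
  · refine congrArg sSup (Set.ext fun b => mem_rotate.trans ?_)
    simp only [hcx, hc, false_and, not_false_eq_true, and_true, or_false]
    rfl

theorem IsNuFace.rotate (hT : IsNuFace ν T) (hup : Consecutive (column T x) y y')
    (hright : Consecutive (row T y) x x') : IsNuFace ν (rotate T x y x' y') := by
  have hx := hright.lt
  have hy := hup.lt
  obtain ⟨hx', hx'y, -⟩ := hT.bounds hright.right_mem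
  refine isNuFace_iff.2 ⟨Set.union_subset (Set.sdiff_subset.trans hT.1) ?_, ?_⟩
  · exact Set.singleton_subset_iff.2 ⟨hx', hx'y.trans hy.le, (hT.bounds hup.right_mem).2.2⟩
  intro a b c d hp hq hac hcb
  rcases mem_rotate.1 hp with ⟨hpT, hne⟩ | ⟨rfl, rfl⟩ <;>
    rcases mem_rotate.1 hq with ⟨hqT, -⟩ | ⟨rfl, rfl⟩
  · exact hT.snd_le hpT hqT hac hcb
  · rcases lt_trichotomy a x with hax | rfl | hxa
    · exact hT.snd_le hpT hup.right_mem hax ((heightAt_mono hx.le hx').trans hcb)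
    · have hyb : y ≤ b := hT.snd_le hpT hright.right_mem hac hcb
      exact hup.right_le hpT (by omega)
    · have hyb : y ≤ b := hT.snd_le hpT hright.right_mem hac hcb
      have hby : b ≤ y := hT.snd_le hup.left_mem hpT hxa ((heightAt_mono hac.le hx').trans hx'y)
      obtain rfl := le_antisymm hby hyb
      exact absurd hpT (hright.notMem_of_lt_of_lt a hxa hac)
  · exact hT.snd_le hup.right_mem hqT (hx.trans hac) hcb
  · exact absurd hac (lt_irrefl _)

namespace IsNuTree

theorem exists_mem_rotate_of_northEast (hT : IsNuTree ν T)
    (hup : Consecutive (column T x) y y') (hright : Consecutive (row T y) x x')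
    (hxa : x < a) (hyb : y < b) (hay : heightAt ν a ≤ y) (hne : ¬ (a = x' ∧ b = y')) :
    ∃ c d, (c, d) ∈ rotate T x y x' y' ∧
      (a < c ∧ b < d ∧ heightAt ν c ≤ b ∨ c < a ∧ d < b ∧ heightAt ν a ≤ d) := by
  have hF := hT.isNuFace
  have hx := hright.lt
  have hy := hup.lt
  obtain ⟨hx', hx'y, hyn⟩ := hF.bounds hright.right_mem
  rcases lt_or_ge y' b with hb | hb
  · exact ⟨x, y', mem_rotate.2 (.inl ⟨hup.right_mem, by omega⟩), .inr ⟨hxa, hb, by omega⟩⟩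
  rcases lt_or_ge x' a with ha | ha
  · exact ⟨x', y, mem_rotate.2 (.inl ⟨hright.right_mem, by omega⟩), .inr ⟨ha, hyb, hay⟩⟩
  rcases ha.lt_or_eq with ha | rfl
  · rcases hb.lt_or_eq with hb | rfl
    · exact ⟨x', y', mem_rotate.2 (.inr ⟨rfl, rfl⟩), .inl ⟨ha, hb, by omega⟩⟩
    -- The node incompatible with `(a, y)` is also incompatible with `(a, y')`.
    obtain ⟨c, d, hq, ⟨hac, hyd, hc⟩ | ⟨hca, hdy, hd⟩⟩ :=
      hT.exists_incompatible (by omega) hay hyn (hright.notMem_of_lt_of_lt a hxa ha)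
    · exact absurd (hF.snd_le hup.left_mem hq (hxa.trans hac) hc) (not_le.2 hyd)
    · exact ⟨c, d, mem_rotate.2 (.inl ⟨hq, by omega⟩), .inr ⟨hca, hdy.trans hy, hd⟩⟩
  · have hb : b < y' := by omega
    -- The node incompatible with `(x, b)` is also incompatible with `(x', b)`.
    obtain ⟨hxm, -, hyn⟩ := hF.bounds hup.right_mem
    obtain ⟨c, d, hq, ⟨hxc, hbd, hc⟩ | ⟨hcx, hdb, hd⟩⟩ :=
      hT.exists_incompatible hxm ((hF.bounds hup.left_mem).2.1.trans hyb.le) (by omega)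
        (hup.notMem_of_lt_of_lt b hyb hb)
    · have hac : a < c := by
        by_contra! hca
        have := hF.snd_le hup.left_mem hq hxc ((heightAt_mono hca hx').trans hay)
        omega
      exact ⟨c, d, mem_rotate.2 (.inl ⟨hq, by omega⟩), .inl ⟨hac, hbd, hc⟩⟩
    · exact absurd (hF.snd_le hq hup.right_mem hcx hd) (by omega)

theorem rotate (hT : IsNuTree ν T) (hup : Consecutive (column T x) y y')
    (hright : Consecutive (row T y) x x') : IsNuTree ν (rotate T x y x' y') := by
  have hx := hright.lt
  have hy := hup.lt
  refine isNuTree_iff.2 ⟨hT.isNuFace.rotate hup hright, fun a b ⟨ha, hab, hb⟩ hp => ?_⟩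
  rw [mem_rotate, not_or] at hp
  by_cases hpT : (a, b) ∈ T
  · obtain ⟨rfl, rfl⟩ : a = x ∧ b = y := not_not.1 fun h => hp.1 ⟨hpT, h⟩
    exact ⟨x', y', mem_rotate.2 (.inr ⟨rfl, rfl⟩),
      .inl ⟨hx, hy, (hT.isNuFace.bounds hright.right_mem).2.1⟩⟩
  obtain ⟨c, d, hq, hpq⟩ := hT.exists_incompatible ha hab hb hpT
  by_cases hcd : c = x ∧ d = y
  · obtain ⟨rfl, rfl⟩ := hcd
    rcases hpq with ⟨hac, hbd, hc⟩ | ⟨hca, hdb, hd⟩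
    · exact ⟨c, y', mem_rotate.2 (.inl ⟨hup.right_mem, by omega⟩), .inl ⟨hac, hbd.trans hy, hc⟩⟩
    · exact hT.exists_mem_rotate_of_northEast hup hright hca hdb hd hp.2
  · exact ⟨c, d, mem_rotate.2 (.inl ⟨hq, hcd⟩), hpq⟩

end IsNuTree

end Rotation

/-! ### Comparing two ν-trees -/

section Order

variable {ν : List Bool} {T T' S : Set (ℕ × ℕ)} {c x y y' : ℕ}

theorem exists_lt_forall_lt_eq {ι α : Type*} [LinearOrder ι] [WellFoundedLT ι] [PartialOrder α]
    {f g : ι → α} (h : f < g) : ∃ i, f i < g i ∧ ∀ j < i, f j = g j := by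
  obtain ⟨hle, hlt⟩ := Pi.lt_def.1 h
  obtain ⟨i, hi, hmin⟩ := wellFounded_lt.has_min {i | f i < g i} hlt
  exact ⟨i, hi, fun j hj => (hle j).eq_of_not_lt fun hjlt => hmin j hjlt hj⟩

namespace IsNuTree

theorem exists_consecutive_colTop (hT : IsNuTree ν T) (hc0 : 0 < c) (hc : c ≤ eastSteps ν) :
    ∃ x, Consecutive (row T (colTop T c)) x c := by
  obtain ⟨y, hp, x, hxc, hx⟩ := hT.exists_mem_col_mem_left hc0 hc
  rw [hT.isNuFace.colTop_eq_of_mem_left hxc hx hp]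
  exact exists_consecutive_left (S := row T y) hx hp hxc

theorem exists_consecutive_of_colTop_eq (hT : IsNuTree ν T) (hT' : IsNuTree ν T') (hxc : x < c)
    (hc : c ≤ eastSteps ν) (hcy : heightAt ν c ≤ y) (hp : (x, y) ∈ T)
    (hx : colTop T x = colTop T' x) (hy : y < colTop T' c) :
    ∃ y', Consecutive (column T x) y y' := by
  obtain ⟨hmem, htop⟩ := hT.isNuFace.isGreatest_colTop hp
  rcases (htop hp).eq_or_lt with hxy | hlt
  · have hp' : (x, y) ∈ T' := hxy ▸ hx ▸ hT'.colTop_mem (hxc.le.trans hc)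
    exact absurd (hT'.isNuFace.snd_le hp' (hT'.colTop_mem hc) hxc hcy) (not_le.2 hy)
  · exact exists_consecutive_right (S := column T x) hp hmem hlt

theorem le_colTop_of_consecutive (hT : IsNuTree ν T) (hT' : IsNuTree ν T')
    (hle : colTop T ≤ colTop T') (hup : Consecutive (column T x) y y') (hc : c ≤ eastSteps ν)
    (hcy : heightAt ν c ≤ y) (hy : y < colTop T' c) : y' ≤ colTop T' c := by
  have hF := hT.isNuFace
  rcases (Nat.succ_le_of_lt hup.lt).lt_or_eq with hlt | rfl
  · obtain ⟨d, hxd, hd, hdy⟩ := hT.exists_right_of_consecutive hup hlt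
    have hyd : y < heightAt ν d := by
      by_contra! hle
      exact absurd (hF.snd_le hup.left_mem hd hxd hle) (not_le.2 hup.lt)
    have hcd : c < d := by
      by_contra! hdc
      exact absurd (heightAt_mono hdc hc) (by omega)
    calc y' ≤ colTop T d := (hF.isGreatest_colTop hd).2 hd
      _ ≤ colTop T' d := hle d
      _ ≤ colTop T' c := hT'.isNuFace.snd_le (hT'.colTop_mem hc)
        (hT'.colTop_mem (hF.bounds hd).1) hcd (hdy.trans hy)
  · exact hy

theorem exists_rotate_colTop_le (hT : IsNuTree ν T) (hT' : IsNuTree ν T')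
    (hlt : colTop T < colTop T') : ∃ S, IsNuTree ν S ∧ IsRightRotation T S ∧
      colTop T < colTop S ∧ colTop S ≤ colTop T' := by
  have hF := hT.isNuFace
  obtain ⟨c, hc, hleft⟩ := exists_lt_forall_lt_eq hlt
  have hc0 : 0 < c := by
    by_contra! h
    obtain rfl := Nat.le_zero.1 h
    rw [hT.colTop_zero, hT'.colTop_zero] at hc
    exact hc.false
  have hcm := hT'.isNuFace.le_eastSteps_of_lt_colTop hc
  obtain ⟨x, hright⟩ := hT.exists_consecutive_colTop hc0 hcm
  have hcy := (hF.bounds hright.right_mem).2.1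
  obtain ⟨y', hup⟩ :=
    hT.exists_consecutive_of_colTop_eq hT' hright.lt hcm hcy hright.left_mem
      (hleft x hright.lt) hc
  refine ⟨_, hT.rotate hup hright, (isRightRotation_iff hF).2 ⟨x, _, c, y', hup, hright, rfl⟩, ?_⟩
  rw [hF.colTop_rotate hup hright, lt_update_self_iff, update_le_iff]
  exact ⟨hup.lt, hT.le_colTop_of_consecutive hT' hlt.le hup hcm hcy hc,
    fun a _ => hlt.le a⟩

end IsNuTree

theorem colTop_le_of_treeLE (h : TreeLE ν T T') : colTop T ≤ colTop T' := by
  induction h with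
  | refl => exact le_rfl
  | tail _ hstep ih =>
    obtain ⟨hA, -, hrot⟩ := hstep
    obtain ⟨x, y, x', y', hup, hright, rfl⟩ := (isRightRotation_iff hA.isNuFace).1 hrot
    rw [hA.isNuFace.colTop_rotate hup hright]
    refine ih.trans (le_update_self_iff.2 ?_)
    rw [hA.isNuFace.colTop_eq_of_mem_left hright.lt hright.left_mem hright.right_mem]
    exact hup.lt.le

theorem treeLE_of_colTop_le (hT : IsNuTree ν T) (hT' : IsNuTree ν T')
    (hle : colTop T ≤ colTop T') : TreeLE ν T T' := by
  induction hk : ∑ c ∈ Finset.range (eastSteps ν + 1), (colTop T' c - colTop T c)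
    using Nat.strong_induction_on generalizing T with
  | _ k ih =>
  rcases hle.eq_or_lt with heq | hlt
  · rw [hT.eq_of_colTop_eq hT' heq]
    exact Relation.ReflTransGen.refl
  obtain ⟨S, hS, hrot, hTS, hST'⟩ := hT.exists_rotate_colTop_le hT' hlt
  refine Relation.ReflTransGen.head ⟨hT, hS, hrot⟩ (ih _ ?_ hS hST' rfl)
  obtain ⟨c, hc⟩ := (Pi.lt_def.1 hTS).2
  have hcm := hS.isNuFace.le_eastSteps_of_lt_colTop hc
  rw [← hk]
  exact Finset.sum_lt_sum (fun a _ => Nat.sub_le_sub_left (hTS.le a) _)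
    ⟨c, Finset.mem_range_succ_iff.2 hcm, Nat.sub_lt_sub_left (hc.trans_le (hST' c)) hc⟩

theorem treeLE_iff_colTop_le (hT : IsNuTree ν T) (hT' : IsNuTree ν T') :
    TreeLE ν T T' ↔ colTop T ≤ colTop T' :=
  ⟨colTop_le_of_treeLE, treeLE_of_colTop_le hT hT'⟩

end Order

theorem rotations_iff_bracket_le (ν : List Bool) (T T' : Set (ℕ × ℕ))
    (hT : IsNuTree ν T) (hT' : IsNuTree ν T') :
    (TreeLE ν T T' ↔ listLE (bracketOfTree ν T) (bracketOfTree ν T')) ∧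
    ((TreeLE ν T T' ∧ T ≠ T') ↔
      (listLE (bracketOfTree ν T) (bracketOfTree ν T') ∧
        bracketOfTree ν T ≠ bracketOfTree ν T')) := by
  have key := (treeLE_iff_colTop_le hT hT').trans (listLE_bracketOfTree_iff hT hT').symm
  exact ⟨key, and_congr key (not_congr (bracketOfTree_eq_iff hT hT').symm)⟩
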